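/- For every compact set K in C(I) and every ε > 0 there exists t₀ > 0 such that for every closed subinterval J ⊆ [0,1] of length at most t₀ and every nonempty subset A ⊆ K, one has sup_{f∈A} min(1, max_{x∈J} f(x) + 4·max(|J|, diam f(J))) − inf_{f∈A} max(0, min_{x∈J} f(x) − 4·max(|J|, diam f(J))) ≤ diam A + ε, where diam A is the diameter of A in the supremum metric, |J| is the length of J, and diam f(J) is the diameter of the image f(J). -/

import Mathlib

/-!
A compact set of maps is uniformly equicontinuous, because evaluation is uniformly continuous on
the compact set `K ×ˢ univ` (`equicontinuity_modulus`). So for `η > 0` and `[a, b]` short enough,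
every `f ∈ K` moves by at most `η` over `[a, b]`, and the length of `[a, b]` is itself at most `η`;
hence `topVal f a b ≤ f a + 5 η` and `botVal f a b ≥ f a - 5 η`. For `f, g ∈ A` this gives
`topVal f a b - botVal g a b ≤ f a - g a + 10 η ≤ diam A + 10 η`, and `η = ε / 10` suffices.
-/

open unitInterval

/-- The prescribed "top" value associated to `f` and the interval `[a, b] ⊆ I`:
`min(1, max_{x ∈ [a,b]} f(x) + 4·max(|[a,b]|, diam f([a,b])))`. -/
noncomputable def topVal (f : C(I, I)) (a b : I) : ℝ :=
  min 1 (sSup ((fun x : I => (f x : ℝ)) '' Set.Icc a b) +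
    4 * max ((b : ℝ) - (a : ℝ)) (Metric.diam ((fun x : I => (f x : ℝ)) '' Set.Icc a b)))

/-- The prescribed "bottom" value associated to `f` and the interval `[a, b] ⊆ I`:
`max(0, min_{x ∈ [a,b]} f(x) − 4·max(|[a,b]|, diam f([a,b])))`. -/
noncomputable def botVal (f : C(I, I)) (a b : I) : ℝ :=
  max 0 (sInf ((fun x : I => (f x : ℝ)) '' Set.Icc a b) -
    4 * max ((b : ℝ) - (a : ℝ)) (Metric.diam ((fun x : I => (f x : ℝ)) '' Set.Icc a b)))

theorem equicontinuity_modulus (K : Set C(I, I)) (hK : IsCompact K) (η : ℝ) (hη : 0 < η) :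
    ∃ δ > (0 : ℝ), ∀ f ∈ K, ∀ x y : I, dist x y < δ → dist (f x) (f y) < η := by
  have hu : UniformContinuousOn (fun p : C(I, I) × I => p.1 p.2) (K ×ˢ Set.univ) :=
    (hK.prod isCompact_univ).uniformContinuousOn_of_continuous (by fun_prop)
  obtain ⟨δ, hδ, h⟩ := Metric.uniformContinuousOn_iff.1 hu η hη
  refine ⟨δ, hδ, fun f hf x y hxy => h (f, x) ⟨hf, trivial⟩ (f, y) ⟨hf, trivial⟩ ?_⟩
  simpa [Prod.dist_eq, hδ] using hxy

theorem topVal_le_and_le_botVal (f : C(I, I)) (a b : I) (hab : a ≤ b) (η : ℝ)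
    (hlen : (b : ℝ) - a ≤ η)
    (h : ∀ x ∈ Set.Icc a b, ∀ y ∈ Set.Icc a b, dist (f x) (f y) ≤ η) :
    topVal f a b ≤ f a + 5 * η ∧ (f a : ℝ) - 5 * η ≤ botVal f a b := by
  have ha : a ∈ Set.Icc a b := ⟨le_rfl, hab⟩
  have hne : ((fun x : I => (f x : ℝ)) '' Set.Icc a b).Nonempty := ⟨_, a, ha, rfl⟩
  have hη : 0 ≤ η := dist_nonneg.trans (h a ha a ha)
  have habs : ∀ x ∈ Set.Icc a b, |(f x : ℝ) - f a| ≤ η := fun x hx => h x hx a ha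
  have hdiam : Metric.diam ((fun x : I => (f x : ℝ)) '' Set.Icc a b) ≤ η := by
    refine Metric.diam_le_of_forall_dist_le hη ?_
    rintro _ ⟨x, hx, rfl⟩ _ ⟨y, hy, rfl⟩
    exact h x hx y hy
  have hmax := max_le hlen hdiam
  have hsup : sSup ((fun x : I => (f x : ℝ)) '' Set.Icc a b) ≤ f a + η := by
    refine csSup_le hne ?_
    rintro _ ⟨x, hx, rfl⟩
    have := (abs_le.1 (habs x hx)).2
    dsimp only
    linarith
  have hinf : (f a : ℝ) - η ≤ sInf ((fun x : I => (f x : ℝ)) '' Set.Icc a b) := by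
    refine le_csInf hne ?_
    rintro _ ⟨x, hx, rfl⟩
    have := (abs_le.1 (habs x hx)).1
    dsimp only
    linarith
  constructor
  · exact (min_le_right _ _).trans (by linarith)
  · exact le_trans (by linarith) (le_max_right _ _)

theorem compact_top_bot_estimate
    (K : Set C(I, I)) (hK : IsCompact K) (ε : ℝ) (hε : 0 < ε) :
    ∃ t₀ > (0 : ℝ), ∀ a b : I, a ≤ b → (b : ℝ) - (a : ℝ) ≤ t₀ →
      ∀ A : Set C(I, I), A ⊆ K → A.Nonempty →
        sSup ((fun f => topVal f a b) '' A) - sInf ((fun f => botVal f a b) '' A) ≤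
          Metric.diam A + ε := by
  obtain ⟨δ, hδ, hK'⟩ := equicontinuity_modulus K hK (ε / 10) (by positivity)
  refine ⟨min (δ / 2) (ε / 10), by positivity, fun a b hab hlen A hAK hA => ?_⟩
  have key : ∀ f ∈ A, topVal f a b ≤ f a + 5 * (ε / 10) ∧
      (f a : ℝ) - 5 * (ε / 10) ≤ botVal f a b := fun f hf => by
    refine topVal_le_and_le_botVal f a b hab _ (hlen.trans (min_le_right _ _))
      fun x hx y hy => (hK' f (hAK hf) x y ?_).le
    have h1 : (b : ℝ) - a ≤ δ / 2 := hlen.trans (min_le_left _ _)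
    have hx1 : (a : ℝ) ≤ x := hx.1
    have hx2 : (x : ℝ) ≤ b := hx.2
    have hy1 : (a : ℝ) ≤ y := hy.1
    have hy2 : (y : ℝ) ≤ b := hy.2
    rw [Subtype.dist_eq, Real.dist_eq, abs_lt]
    constructor <;> linarith
  have hdiff : ∀ f ∈ A, ∀ g ∈ A, topVal f a b - (Metric.diam A + ε) ≤ botVal g a b := by
    intro f hf g hg
    have h1 : |(f a : ℝ) - g a| ≤ Metric.diam A :=
      (ContinuousMap.dist_apply_le_dist (f := f) (g := g) a).trans
        (Metric.dist_le_diam_of_mem (hK.isBounded.subset hAK) hf hg)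
    have h2 := (abs_le.1 h1).2
    have h3 := (key f hf).1
    have h4 := (key g hg).2
    linarith
  rw [sub_le_iff_le_add]
  refine csSup_le (hA.image _) ?_
  rintro _ ⟨f, hf, rfl⟩
  rw [← sub_le_iff_le_add']
  refine le_csInf (hA.image _) ?_
  rintro _ ⟨g, hg, rfl⟩
  exact hdiff f hf g hg
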